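/- Let v : [0,1] → ℝ be continuous, strictly decreasing, and positive on [0,1), and let β ∈ [1/2, 1]. Then the function g(κ) = v(κ)·(β + κ·(1 − 2β)) is strictly decreasing on [0,1], and κ = 1/2 is the unique solution in [0,1] of the equation v(κ)·(β + κ·(1 − 2β)) = v(1/2)/2. (That is, for β ≥ 1/2 the absolute threshold mechanism with contribution threshold v(1/2)/2 has a unique symmetric monotone equilibrium, in which exactly the users with quantile at most 1/2 contribute the threshold.) -/

import Mathlib

theorem median_threshold_unique_equilibrium_tie_breaking
    (v : ℝ → ℝ)
    (hv_cont : ContinuousOn v (Set.Icc 0 1))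
    (hv_anti : StrictAntiOn v (Set.Icc 0 1))
    (hv_pos : ∀ q ∈ Set.Ico (0:ℝ) 1, 0 < v q)
    (β : ℝ) (hβ : β ∈ Set.Icc (1/2 : ℝ) 1) :
    StrictAntiOn (fun κ : ℝ => v κ * (β + κ * (1 - 2 * β))) (Set.Icc 0 1) ∧
    v (1/2) * (β + (1/2) * (1 - 2 * β)) = v (1/2) / 2 ∧
    (∀ κ ∈ Set.Icc (0:ℝ) 1, v κ * (β + κ * (1 - 2 * β)) = v (1/2) / 2 → κ = 1/2) := by
  obtain ⟨hb1, hb2⟩ := hβ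
  have key : StrictAntiOn (fun κ : ℝ => v κ * (β + κ * (1 - 2 * β))) (Set.Icc 0 1) := by
    intro x hx y hy hxy
    have hlt := hv_anti hx hy hxy
    have hx1 : x < 1 := lt_of_lt_of_le hxy hy.2
    have hvx := hv_pos x ⟨hx.1, hx1⟩
    have hwx : 0 < β + x * (1 - 2 * β) := by
      have h1 : 0 < β * (1 - x) := mul_pos (by linarith) (by linarith)
      have h2 : 0 ≤ x * (1 - β) := mul_nonneg hx.1 (by linarith)
      linarith
    have hwy : 0 ≤ β + y * (1 - 2 * β) := by
      have h1 : 0 ≤ β * (1 - y) := mul_nonneg (by linarith) (by linarith [hy.2])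
      have h2 : 0 ≤ y * (1 - β) := mul_nonneg hy.1 (by linarith)
      linarith
    have hww : β + y * (1 - 2 * β) ≤ β + x * (1 - 2 * β) := by
      have : 0 ≤ (y - x) * (2 * β - 1) := mul_nonneg (by linarith) (by linarith)
      linarith
    show v y * (β + y * (1 - 2 * β)) < v x * (β + x * (1 - 2 * β))
    calc v y * (β + y * (1 - 2 * β)) ≤ max (v y) 0 * (β + y * (1 - 2 * β)) :=
          mul_le_mul_of_nonneg_right (le_max_left _ _) hwy
      _ ≤ max (v y) 0 * (β + x * (1 - 2 * β)) :=
          mul_le_mul_of_nonneg_left hww (le_max_right _ _)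
      _ < v x * (β + x * (1 - 2 * β)) :=
          mul_lt_mul_of_pos_right (max_lt hlt hvx) hwx
  have hhalf : v (1/2) * (β + (1/2) * (1 - 2 * β)) = v (1/2) / 2 := by ring
  refine ⟨key, hhalf, fun κ hκ h => ?_⟩
  exact key.injOn hκ (by constructor <;> norm_num) (h.trans hhalf.symm)
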